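/- Let n ≥ 3 be odd. The configuration of 2n+1 points obtained from a regular n-gon by replacing each vertex by a pair of infinitesimally-close points (so the convex hull has 2n vertices) and adding the barycenter C is monochromatic under the Orchard relation. In particular, for each i, n(P_i,P'_i) = 0, n(P'_i,P_{i+1}) = 2, and n(C,P_i) is even. -/

import Mathlib

open scoped Classical

noncomputable section

/-- Orientation determinant of two vectors in the plane. -/
def det2 (u v : ℝ × ℝ) : ℝ := u.1 * v.2 - u.2 * v.1

/-- The line through `A` and `B` separates the points `P` and `Q`
(they lie in distinct open half-planes determined by the line). -/
def SepLine (A B P Q : ℝ × ℝ) : Prop :=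
  det2 (B - A) (P - A) * det2 (B - A) (Q - A) < 0

/-- A finite planar point set is a generic configuration if no three of its
points are collinear. -/
def Generic (C : Finset (ℝ × ℝ)) : Prop :=
  ∀ a ∈ C, ∀ b ∈ C, ∀ c ∈ C, a ≠ b → a ≠ c → b ≠ c →
    ¬ Collinear ℝ ({a, b, c} : Set (ℝ × ℝ))

/-- `nsep C P Q` is the number of lines spanned by (unordered) pairs of points of
`C \ {P,Q}` that separate `P` from `Q`. -/
def nsep (C : Finset (ℝ × ℝ)) (P Q : ℝ × ℝ) : ℕ :=
  (((C \ {P, Q}).powersetCard 2).filter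
    (fun s => ∃ A ∈ s, ∃ B ∈ s, A ≠ B ∧ SepLine A B P Q)).card

/-- The Orchard relation: `P ∼ Q` iff `n(P,Q) ≡ n - 3 (mod 2)` where `n = |C|`. -/
def Orchard (C : Finset (ℝ × ℝ)) (P Q : ℝ × ℝ) : Prop :=
  (nsep C P Q : ℤ) ≡ (C.card : ℤ) - 3 [ZMOD 2]

/-- A configuration is monochromatic if all its points are Orchard-equivalent. -/
def Mono (C : Finset (ℝ × ℝ)) : Prop :=
  ∀ P ∈ C, ∀ Q ∈ C, P ≠ Q → Orchard C P Q

/-- A configuration is in convex position if each of its points is a vertex of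
the convex hull. -/
def ConvexPos (C : Finset (ℝ × ℝ)) : Prop :=
  ∀ P ∈ C, P ∉ convexHull ℝ ((C : Set (ℝ × ℝ)) \ {P})

/-- The `k`-th vertex of the regular `n`-gon inscribed in the unit circle
centered at the origin. -/
def vtx (n : ℕ) (k : Fin n) : ℝ × ℝ :=
  (Real.cos (2 * Real.pi * k / n), Real.sin (2 * Real.pi * k / n))

/-- The configuration consisting of the vertices of the regular `n`-gon together
with its barycenter (the origin). -/
def ngonWithCenter (n : ℕ) : Finset (ℝ × ℝ) :=
  insert ((0, 0) : ℝ × ℝ) (Finset.image (vtx n) Finset.univ)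

/-- The orientation determinant of a triple of points. -/
def orient (a b c : ℝ × ℝ) : ℝ := det2 (b - a) (c - a)

lemma orient_cycle (a b c : ℝ × ℝ) : orient b c a = orient a b c := by
  simp only [orient, det2, Prod.fst_sub, Prod.snd_sub]; ring

lemma orient_swap (a b c : ℝ × ℝ) : orient b a c = -orient a b c := by
  simp only [orient, det2, Prod.fst_sub, Prod.snd_sub]; ring

lemma orient_swap_right (a b c : ℝ × ℝ) : orient a c b = -orient a b c := by
  simp only [orient, det2, Prod.fst_sub, Prod.snd_sub]; ring

lemma orient_zero_left (a b : ℝ × ℝ) : orient (0, 0) a b = det2 a b := by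
  simp [orient, det2]

lemma orient_zero_right (a b : ℝ × ℝ) : orient a b (0, 0) = det2 a b := by
  simp only [orient, det2, Prod.fst_sub, Prod.snd_sub]; ring

lemma det2_swap (u v : ℝ × ℝ) : det2 v u = -det2 u v := by
  simp only [det2]; ring

lemma det2_self (u : ℝ × ℝ) : det2 u u = 0 := by
  simp only [det2]; ring

lemma sepLine_iff (A B P Q : ℝ × ℝ) :
    SepLine A B P Q ↔ orient A B P * orient A B Q < 0 := Iff.rfl

lemma sepLine_swap_line (A B P Q : ℝ × ℝ) : SepLine A B P Q ↔ SepLine B A P Q := by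
  rw [sepLine_iff, sepLine_iff, orient_swap A B P, orient_swap A B Q, neg_mul_neg]

lemma sepLine_swap (A B P Q : ℝ × ℝ) : SepLine A B P Q ↔ SepLine A B Q P := by
  rw [sepLine_iff, sepLine_iff, mul_comm]

lemma nsep_comm (S : Finset (ℝ × ℝ)) (P Q : ℝ × ℝ) : nsep S P Q = nsep S Q P := by
  simp only [nsep, Finset.pair_comm P Q, fun A B => sepLine_swap A B P Q]

lemma Generic.orient_ne_zero {S : Finset (ℝ × ℝ)} (hS : Generic S) {a b c : ℝ × ℝ}
    (ha : a ∈ S) (hb : b ∈ S) (hc : c ∈ S) (hab : a ≠ b) (hac : a ≠ c) (hbc : b ≠ c) :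
    orient a b c ≠ 0 := by
  intro h
  apply hS a ha b hb c hc hab hac hbc
  rw [collinear_iff_of_mem (p₀ := a) (by simp)]
  simp only [orient, det2, Prod.fst_sub, Prod.snd_sub] at h
  have key : ∃ r : ℝ, c = r • (b - a) + a := by
    by_cases h1 : b.1 - a.1 = 0
    · have h2 : b.2 - a.2 ≠ 0 := fun h2 => hab (Prod.ext (by linarith) (by linarith))
      refine ⟨(c.2 - a.2) / (b.2 - a.2), Prod.ext ?_ ?_⟩
      · have : (b.2 - a.2) * (c.1 - a.1) = 0 := by rw [h1] at h; linarith
        have := (mul_eq_zero.mp this).resolve_left h2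
        simp only [Prod.fst_add, Prod.smul_fst, Prod.fst_sub, h1, smul_eq_mul]; linarith
      · simp only [Prod.snd_add, Prod.smul_snd, Prod.snd_sub, smul_eq_mul]; field_simp; ring
    · refine ⟨(c.1 - a.1) / (b.1 - a.1), Prod.ext ?_ ?_⟩
      · simp only [Prod.fst_add, Prod.smul_fst, Prod.fst_sub, smul_eq_mul]; field_simp; ring
      · simp only [Prod.snd_add, Prod.smul_snd, Prod.snd_sub, smul_eq_mul]; field_simp
        linarith
  obtain ⟨r, hr⟩ := key
  refine ⟨b - a, ?_⟩
  rintro p (rfl | rfl | rfl)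
  · exact ⟨0, by simp⟩
  · exact ⟨1, by simp⟩
  · exact ⟨r, hr⟩

lemma not_sepLine_of_nsep_eq_zero {S : Finset (ℝ × ℝ)} {P Q A B : ℝ × ℝ}
    (h : nsep S P Q = 0) (hA : A ∈ S) (hB : B ∈ S) (hAB : A ≠ B) (hAP : A ≠ P) (hAQ : A ≠ Q)
    (hBP : B ≠ P) (hBQ : B ≠ Q) : ¬ SepLine A B P Q := by
  intro hsep
  rw [nsep, Finset.card_eq_zero, Finset.filter_eq_empty_iff] at h
  refine h (x := {A, B}) ?_ ⟨A, by simp, B, by simp, hAB, hsep⟩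
  rw [Finset.mem_powersetCard]
  refine ⟨?_, Finset.card_pair hAB⟩
  intro x hx
  simp only [Finset.mem_insert, Finset.mem_singleton] at hx
  rcases hx with rfl | rfl <;> simp [*]

lemma Convex.mem_of_mul_eq {K : Set (ℝ × ℝ)} (hK : Convex ℝ K) {x y z w : ℝ × ℝ}
    (hx : x ∈ K) (hy : y ∈ K) (hz : z ∈ K) {a b c d : ℝ} (ha : 0 < a) (hb : 0 < b) (hc : 0 < c)
    (hd : d = a + b + c) (h₁ : d * w.1 = a * x.1 + b * y.1 + c * z.1)
    (h₂ : d * w.2 = a * x.2 + b * y.2 + c * z.2) : w ∈ K := by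
  have hs : 0 < a + b + c := by positivity
  have hxy := convex_iff_div.mp hK hx hy ha.le hb.le (by positivity)
  have hxyz := convex_iff_div.mp hK hxy hz (add_pos ha hb).le hc.le hs
  subst hd
  convert hxyz using 1
  ext
  · simp only [Prod.fst_add, Prod.smul_fst, smul_eq_mul]; field_simp; linarith
  · simp only [Prod.snd_add, Prod.smul_snd, smul_eq_mul]; field_simp; linarith

/-- Among four points in convex position, if the line `XY` separates `A` and `B`, then the line
`AB` separates `X` and `Y`. -/
lemma ConvexPos.sepLine_of_sepLine {S : Finset (ℝ × ℝ)} (hS : ConvexPos S) {A B X Y : ℝ × ℝ}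
    (hA : A ∈ S) (hB : B ∈ S) (hX : X ∈ S) (hY : Y ∈ S) (hAX : A ≠ X) (hAY : A ≠ Y)
    (hBX : B ≠ X) (hBY : B ≠ Y) (hXY : X ≠ Y) (h : SepLine X Y A B) :
    ¬ 0 < orient A B X * orient A B Y := by
  intro hpos
  have mem : ∀ {P Q : ℝ × ℝ}, P ∈ S → P ≠ Q →
      P ∈ convexHull ℝ ((S : Set (ℝ × ℝ)) \ {Q}) := fun hP hPQ =>
    subset_convexHull _ _ ⟨hP, hPQ⟩
  have hXK := hS X hX
  have hYK := hS Y hY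
  have dep1 : orient A B Y * X.1 + orient X Y B * A.1
      = orient A B X * Y.1 + orient X Y A * B.1 := by
    simp only [orient, det2, Prod.fst_sub, Prod.snd_sub]; ring
  have dep2 : orient A B Y * X.2 + orient X Y B * A.2
      = orient A B X * Y.2 + orient X Y A * B.2 := by
    simp only [orient, det2, Prod.fst_sub, Prod.snd_sub]; ring
  have dep0 : orient A B Y + orient X Y B = orient A B X + orient X Y A := by
    simp only [orient, det2, Prod.fst_sub, Prod.snd_sub]; ring
  rw [sepLine_iff] at h
  generalize orient A B X = p at *
  generalize orient A B Y = q at *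
  generalize orient X Y A = a at *
  generalize orient X Y B = b at *
  have hK := fun Q : ℝ × ℝ => convex_convexHull ℝ ((S : Set (ℝ × ℝ)) \ {Q})
  rcases pos_and_pos_or_neg_and_neg_of_mul_pos hpos with ⟨hp, hq⟩ | ⟨hp, hq⟩ <;>
  rcases mul_neg_iff.mp h with ⟨ha, hb⟩ | ⟨ha, hb⟩
  · exact hXK ((hK X).mem_of_mul_eq (mem hY hXY.symm) (mem hB hBX) (mem hA hAX)
      (a := p) (b := a) (c := -b) (d := q) hp ha (by linarith) (by linarith) (by linarith)
      (by linarith))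
  · exact hYK ((hK Y).mem_of_mul_eq (mem hX hXY) (mem hB hBY) (mem hA hAY)
      (a := q) (b := -a) (c := b) (d := p) hq (by linarith) hb (by linarith) (by linarith)
      (by linarith))
  · exact hYK ((hK Y).mem_of_mul_eq (mem hX hXY) (mem hB hBY) (mem hA hAY)
      (a := -q) (b := a) (c := -b) (d := -p) (by linarith) ha (by linarith) (by linarith)
      (by linarith) (by linarith))
  · exact hXK ((hK X).mem_of_mul_eq (mem hY hXY.symm) (mem hB hBX) (mem hA hAX)
      (a := -p) (b := -a) (c := b) (d := -q) (by linarith) (by linarith) hb (by linarith)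
      (by linarith) (by linarith))

section Labelled

variable {ι : Type*} [Fintype ι]

/-- The unordered pairs of labels, distinct from `x` and `y`, whose spanned line separates the
points labelled by `x` and `y`. -/
def sepPairs (F : ι → ℝ × ℝ) (x y : ι) : Finset (Finset ι) :=
  ((Finset.univ \ {x, y}).powersetCard 2).filter
    (fun s => ∃ a ∈ s, ∃ b ∈ s, a ≠ b ∧ SepLine (F a) (F b) (F x) (F y))

lemma mem_sepPairs {F : ι → ℝ × ℝ} {x y : ι} {s : Finset ι} :
    s ∈ sepPairs F x y ↔ ∃ a b, a ≠ b ∧ a ≠ x ∧ a ≠ y ∧ b ≠ x ∧ b ≠ y ∧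
      SepLine (F a) (F b) (F x) (F y) ∧ s = {a, b} := by
  simp only [sepPairs, Finset.mem_filter, Finset.mem_powersetCard]
  constructor
  · rintro ⟨⟨hs, hcard⟩, a, ha, b, hb, hab, hsep⟩
    have h1 := hs ha
    have h2 := hs hb
    simp only [Finset.mem_sdiff, Finset.mem_univ, Finset.mem_insert, Finset.mem_singleton,
      true_and, not_or] at h1 h2
    refine ⟨a, b, hab, h1.1, h1.2, h2.1, h2.2, hsep, ?_⟩
    symm
    apply Finset.eq_of_subset_of_card_le
    · intro z hz
      simp only [Finset.mem_insert, Finset.mem_singleton] at hz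
      rcases hz with rfl | rfl <;> assumption
    · rw [hcard, Finset.card_pair hab]
  · rintro ⟨a, b, hab, hax, hay, hbx, hby, hsep, rfl⟩
    refine ⟨⟨?_, Finset.card_pair hab⟩, a, by simp, b, by simp, hab, hsep⟩
    intro z hz
    simp only [Finset.mem_insert, Finset.mem_singleton] at hz
    rcases hz with rfl | rfl <;> simp [*]

lemma pair_mem_sepPairs {F : ι → ℝ × ℝ} {x y a b : ι} (hab : a ≠ b) (hax : a ≠ x) (hay : a ≠ y)
    (hbx : b ≠ x) (hby : b ≠ y) :
    {a, b} ∈ sepPairs F x y ↔ SepLine (F a) (F b) (F x) (F y) := by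
  rw [mem_sepPairs]
  constructor
  · rintro ⟨a', b', -, -, -, -, -, hsep, h⟩
    have h' : ({a, b} : Set ι) = {a', b'} := by
      simpa using congrArg (fun s : Finset ι => (s : Set ι)) h
    rcases Set.pair_eq_pair_iff.mp h' with ⟨rfl, rfl⟩ | ⟨rfl, rfl⟩
    · exact hsep
    · exact (sepLine_swap_line _ _ _ _).mp hsep
  · intro h
    exact ⟨a, b, hab, hax, hay, hbx, hby, h, rfl⟩

lemma nsep_image_univ {F : ι → ℝ × ℝ} (hF : Function.Injective F) (x y : ι) :
    nsep (Finset.univ.image F) (F x) (F y) = (sepPairs F x y).card := by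
  rw [nsep, ← Finset.card_image_of_injective _ (Finset.image_injective hF)]
  congr 1
  ext s
  simp only [Finset.mem_image, Finset.mem_filter, Finset.mem_powersetCard]
  constructor
  · rintro ⟨⟨hs, hcard⟩, hsep⟩
    have hsub : s ⊆ (Finset.univ \ {x, y}).image F := by
      rw [Finset.image_sdiff _ _ hF, Finset.image_insert, Finset.image_singleton]
      exact hs
    obtain ⟨t, ht, rfl⟩ := Finset.subset_image_iff.mp hsub
    refine ⟨t, ?_, rfl⟩
    rw [Finset.card_image_of_injective _ hF] at hcard
    simp only [sepPairs, Finset.mem_filter, Finset.mem_powersetCard]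
    refine ⟨⟨by exact_mod_cast ht, hcard⟩, ?_⟩
    obtain ⟨_, hA, _, hB, hne, h⟩ := hsep
    obtain ⟨a, ha, rfl⟩ := Finset.mem_image.mp hA
    obtain ⟨b, hb, rfl⟩ := Finset.mem_image.mp hB
    exact ⟨a, ha, b, hb, fun h => hne (congrArg F h), h⟩
  · rintro ⟨t, ht, rfl⟩
    simp only [sepPairs, Finset.mem_filter, Finset.mem_powersetCard] at ht
    obtain ⟨⟨hs, hcard⟩, a, ha, b, hb, hab, h⟩ := ht
    refine ⟨⟨?_, by rwa [Finset.card_image_of_injective _ hF]⟩, F a,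
      Finset.mem_image_of_mem F ha, F b, Finset.mem_image_of_mem F hb, hF.ne hab, h⟩
    have := Finset.image_subset_image (f := F) hs
    rwa [Finset.image_sdiff _ _ hF, Finset.image_insert, Finset.image_singleton] at this

lemma card_sepPairs_eq_two {F : ι → ℝ × ℝ} {x y o p q : ι} (hop : o ≠ p) (hoq : o ≠ q)
    (hpq : p ≠ q) (hox : o ≠ x) (hoy : o ≠ y) (hpx : p ≠ x) (hpy : p ≠ y) (hqx : q ≠ x)
    (hqy : q ≠ y)
    (houter : ∀ a b, a ≠ b → a ≠ o → b ≠ o → a ≠ x → a ≠ y → b ≠ x → b ≠ y →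
      ¬ SepLine (F a) (F b) (F x) (F y))
    (hcentral : ∀ a, a ≠ o → a ≠ x → a ≠ y →
      (SepLine (F o) (F a) (F x) (F y) ↔ a = p ∨ a = q)) :
    (sepPairs F x y).card = 2 := by
  have hset : sepPairs F x y = {{o, p}, {o, q}} := by
    ext s
    simp only [Finset.mem_insert, Finset.mem_singleton]
    constructor
    · rw [mem_sepPairs]
      rintro ⟨a, b, hab, hax, hay, hbx, hby, hsep, rfl⟩
      by_cases ha : a = o
      · subst ha
        rcases (hcentral b hab.symm hbx hby).mp hsep with rfl | rfl <;> simp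
      by_cases hb : b = o
      · subst hb
        rw [Finset.pair_comm]
        rcases (hcentral a hab hax hay).mp ((sepLine_swap_line _ _ _ _).mp hsep) with rfl | rfl <;>
          simp
      · exact absurd hsep (houter a b hab ha hb hax hay hbx hby)
    · rintro (rfl | rfl)
      · exact (pair_mem_sepPairs hop hox hoy hpx hpy).mpr
          ((hcentral p hop.symm hpx hpy).mpr (Or.inl rfl))
      · exact (pair_mem_sepPairs hoq hox hoy hqx hqy).mpr
          ((hcentral q hoq.symm hqx hqy).mpr (Or.inr rfl))
  rw [hset, Finset.card_pair]
  intro h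
  have hp : p ∈ ({o, q} : Finset ι) := by rw [← h]; simp
  simp only [Finset.mem_insert, Finset.mem_singleton] at hp
  exact hp.elim hop.symm hpq

end Labelled

lemma Finset.even_card_of_involutive {α : Type*} {s : Finset α} {g : α → α}
    (hg : Function.Involutive g) (hmem : ∀ a ∈ s, g a ∈ s) (hne : ∀ a ∈ s, g a ≠ a) :
    Even s.card := by
  rw [← ZMod.natCast_eq_zero_iff_even, ← nsmul_one, ← Finset.sum_const]
  exact Finset.sum_involution (fun a _ => g a) (fun _ _ => by decide) (fun a ha _ => hne a ha)
    hmem (fun a _ => hg a)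

/-- A labelled planar configuration whose labels, except for that of a central point, come in
pairs of twins: a line through two other points never separates two twins, and a line through
two twins never separates two other points. -/
structure IsDoubled {ι : Type*} (F : ι → ℝ × ℝ) (o : ι) (twin : ι → ι) : Prop where
  injective : Function.Injective F
  orient_ne_zero : ∀ a b c, a ≠ b → a ≠ c → b ≠ c → orient (F a) (F b) (F c) ≠ 0
  twin_twin : Function.Involutive twin
  twin_eq_self : ∀ a, twin a = a ↔ a = o
  twin_mul_pos : ∀ a b c, a ≠ o → b ≠ a → b ≠ twin a → c ≠ a → c ≠ twin a → b ≠ c →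
    0 < orient (F a) (F b) (F c) * orient (F (twin a)) (F b) (F c)
  edge_mul_pos : ∀ a b c, a ≠ o → b ≠ a → b ≠ twin a → c ≠ a → c ≠ twin a →
    0 < orient (F a) (F (twin a)) (F b) * orient (F a) (F (twin a)) (F c)

namespace IsDoubled

variable {ι : Type*} {F : ι → ℝ × ℝ} {o : ι} {twin : ι → ι}

/-- The map exchanging twins, except for `x`, `y` and their twins. -/
def flip (twin : ι → ι) (x y a : ι) : ι :=
  if a = x ∨ a = twin x ∨ a = y ∨ a = twin y then a else twin a

lemma flip_involutive (h : IsDoubled F o twin) (x y : ι) :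
    Function.Involutive (flip twin x y) := by
  intro a
  have := h.twin_twin
  unfold flip Function.Involutive at *
  grind

lemma orient_flip_mul_pos (h : IsDoubled F o twin) {x y z a b : ι} (hz : z = x ∨ z = y)
    (hax : a ≠ x) (hay : a ≠ y) (hbz : b ≠ z) (hba : b ≠ a) (hbta : b ≠ twin a) :
    0 < orient (F a) (F b) (F z) * orient (F (flip twin x y a)) (F b) (F z) := by
  have htt := h.twin_twin
  unfold flip
  split_ifs with hf
  · refine mul_self_pos.mpr (h.orient_ne_zero _ _ _ hba.symm ?_ hbz)
    rcases hz with rfl | rfl <;> assumption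
  · by_cases ho : a = o
    · rw [(h.twin_eq_self a).mpr ho]
      refine mul_self_pos.mpr (h.orient_ne_zero _ _ _ hba.symm ?_ hbz)
      rcases hz with rfl | rfl <;> assumption
    · apply h.twin_mul_pos a b z ho hba hbta _ _ hbz
      · rcases hz with rfl | rfl
        exacts [hax.symm, hay.symm]
      · unfold Function.Involutive at htt
        grind

lemma not_sepLine_twin (h : IsDoubled F o twin) {x y a : ι} (ho : a ≠ o) (hax : a ≠ x)
    (hay : a ≠ y) (htx : twin a ≠ x) (hty : twin a ≠ y) :
    ¬ SepLine (F a) (F (twin a)) (F x) (F y) := by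
  rw [sepLine_iff, not_lt]
  exact (h.edge_mul_pos a x y ho hax.symm htx.symm hay.symm hty.symm).le

lemma sepLine_flip (h : IsDoubled F o twin) {x y a b : ι} (hax : a ≠ x) (hay : a ≠ y)
    (hbx : b ≠ x) (hby : b ≠ y) (hba : b ≠ a) (hsep : SepLine (F a) (F b) (F x) (F y)) :
    SepLine (F (flip twin x y a)) (F (flip twin x y b)) (F x) (F y) := by
  have htt := h.twin_twin
  have hbta : b ≠ twin a := by
    rintro rfl
    refine h.not_sepLine_twin ?_ hax hay hbx hby hsep
    rintro rfl
    exact hba ((h.twin_eq_self a).mpr rfl)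
  have hflip : ∀ c, flip twin x y c = c ∨ flip twin x y c = twin c := fun c => by
    unfold flip; split_ifs <;> simp
  have hfx : flip twin x y a ≠ x ∧ flip twin x y a ≠ y := by
    unfold flip Function.Involutive at *; grind
  have hab' : flip twin x y a ≠ b ∧ flip twin x y a ≠ twin b := by
    unfold Function.Involutive at htt; grind
  have key : ∀ z, z = x ∨ z = y → 0 < orient (F a) (F b) (F z) *
      orient (F (flip twin x y a)) (F (flip twin x y b)) (F z) := by
    intro z hz
    have hbz : b ≠ z := by rcases hz with rfl | rfl <;> assumption
    have haz : flip twin x y a ≠ z := by rcases hz with rfl | rfl; exacts [hfx.1, hfx.2]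
    have h1 := h.orient_flip_mul_pos hz hax hay hbz hba hbta
    have h2 := h.orient_flip_mul_pos hz hbx hby haz hab'.1 hab'.2
    rw [orient_swap (F (flip twin x y a)), orient_swap (F (flip twin x y a)) (F (flip _ _ _ _)),
      neg_mul_neg] at h2
    by_contra hcon
    nlinarith [mul_pos h1 h2, mul_self_nonneg (orient (F (flip twin x y a)) (F b) (F z))]
  have k1 := key x (Or.inl rfl)
  have k2 := key y (Or.inr rfl)
  rw [sepLine_iff] at hsep ⊢
  by_contra hcon
  nlinarith [mul_pos k1 k2]

lemma even_card_sepPairs_fixed [Fintype ι] (h : IsDoubled F o twin) (x y : ι) :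
    Even ((sepPairs F x y).filter (fun s => s.image (flip twin x y) ≠ s)).card := by
  have hinv := h.flip_involutive x y
  have hinv' : Function.Involutive (fun s : Finset ι => s.image (flip twin x y)) := fun s => by
    simp only [Finset.image_image, hinv.comp_self, Finset.image_id]
  refine Finset.even_card_of_involutive hinv' ?_ ?_
  · intro s hs
    simp only [Finset.mem_filter] at hs ⊢
    refine ⟨?_, fun heq => hs.2 (hinv'.injective heq)⟩
    obtain ⟨a, b, hab, hax, hay, hbx, hby, hsep, rfl⟩ := mem_sepPairs.mp hs.1
    rw [Finset.image_insert, Finset.image_singleton]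
    refine mem_sepPairs.mpr ⟨_, _, hinv.injective.ne hab, ?_, ?_, ?_, ?_,
      h.sepLine_flip hax hay hbx hby hab.symm hsep, rfl⟩
    all_goals
      have htt := h.twin_twin
      unfold flip Function.Involutive at *
      grind
  · intro s hs
    exact (Finset.mem_filter.mp hs).2

lemma fixed_cases [Fintype ι] (h : IsDoubled F o twin) {x y : ι} {s : Finset ι}
    (hs : s ∈ sepPairs F x y) (hfix : s.image (flip twin x y) = s) :
    ∃ a b, a ≠ b ∧ (a = o ∨ a = twin x ∨ a = twin y) ∧ (b = o ∨ b = twin x ∨ b = twin y) ∧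
      s = {a, b} := by
  obtain ⟨a, b, hab, hax, hay, hbx, hby, hsep, rfl⟩ := mem_sepPairs.mp hs
  have hbta : b ≠ twin a := by
    rintro rfl
    refine h.not_sepLine_twin ?_ hax hay hbx hby hsep
    rintro rfl
    exact hab ((h.twin_eq_self a).mpr rfl).symm
  have hab' : a ≠ twin b := fun hh => hbta (by rw [hh, h.twin_twin])
  have ha : flip twin x y a ∈ ({a, b} : Finset ι) := by
    rw [← hfix]; exact Finset.mem_image_of_mem _ (by simp)
  have hb : flip twin x y b ∈ ({a, b} : Finset ι) := by
    rw [← hfix]; exact Finset.mem_image_of_mem _ (by simp)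
  have hta := h.twin_eq_self a
  have htb := h.twin_eq_self b
  simp only [Finset.mem_insert, Finset.mem_singleton] at ha hb
  refine ⟨a, b, hab, ?_, ?_, rfl⟩ <;> unfold flip at * <;> grind

lemma even_card_sepPairs_center [Fintype ι] (h : IsDoubled F o twin) (x : ι) :
    Even (sepPairs F o x).card := by
  have hfix := h.even_card_sepPairs_fixed o x
  rwa [Finset.filter_true_of_mem] at hfix
  intro s hs heq
  have hto := (h.twin_eq_self o).mpr rfl
  obtain ⟨a, b, hab, ha, hb, rfl⟩ := h.fixed_cases hs heq
  have hm := mem_sepPairs.mp hs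
  obtain ⟨a', b', -, hao, -, hbo, -, -, heq'⟩ := hm
  have : o ∈ ({a', b'} : Finset ι) := by
    rw [← heq']; simp only [Finset.mem_insert, Finset.mem_singleton]; grind
  simp only [Finset.mem_insert, Finset.mem_singleton] at this
  grind

lemma even_card_sepPairs [Fintype ι] (h : IsDoubled F o twin) {x y : ι} (hxo : x ≠ o)
    (hyo : y ≠ o) (hxy : x ≠ y) (hxty : x ≠ twin y) : Even (sepPairs F x y).card := by
  have htt := h.twin_twin
  have htx := h.twin_eq_self x
  have hty := h.twin_eq_self y
  have hto := (h.twin_eq_self o).mpr rfl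
  have hytx : y ≠ twin x := fun hh => hxty (by rw [hh, htt])
  have htxy : twin x ≠ twin y := htt.injective.ne hxy
  have hotx : o ≠ twin x := fun hh => hxo (by rw [← htt x, ← hh, hto])
  have hoty : o ≠ twin y := fun hh => hyo (by rw [← htt y, ← hh, hto])
  have htx' : twin x ≠ x := by rwa [Ne, htx]
  have hty' : twin y ≠ y := by rwa [Ne, hty]
  have hfix := h.even_card_sepPairs_fixed x y
  rw [← Finset.card_filter_add_card_filter_not (s := sepPairs F x y)
    (fun s => s.image (flip twin x y) = s)]
  refine Even.add ?_ hfix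
  have hset : (sepPairs F x y).filter (fun s => s.image (flip twin x y) = s) =
      ({{o, twin x}, {o, twin y}, {twin x, twin y}} : Finset (Finset ι)).filter
        (fun s => s ∈ sepPairs F x y) := by
    have ho : flip twin x y o = o := by unfold flip; simp [hto]
    have hx : flip twin x y (twin x) = twin x := by unfold flip; simp
    have hy : flip twin x y (twin y) = twin y := by unfold flip; simp
    ext s
    simp only [Finset.mem_filter, Finset.mem_insert, Finset.mem_singleton]
    constructor
    · rintro ⟨hs, heq⟩
      refine ⟨?_, hs⟩
      obtain ⟨a, b, hab, ha, hb, rfl⟩ := h.fixed_cases hs heq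
      rcases ha with rfl | rfl | rfl <;> rcases hb with rfl | rfl | rfl <;>
        simp_all [Finset.pair_comm]
    · rintro ⟨hs, hm⟩
      refine ⟨hm, ?_⟩
      rcases hs with rfl | rfl | rfl <;> simp [Finset.image_insert, ho, hx, hy]
  rw [hset]
  have m1 := pair_mem_sepPairs (F := F) hotx hxo.symm hyo.symm htx' hytx.symm
  have m2 := pair_mem_sepPairs (F := F) hoty hxo.symm hyo.symm hxty.symm hty'
  have m3 := pair_mem_sepPairs (F := F) htxy htx' hytx.symm hxty.symm hty'
  rw [sepLine_iff] at m1 m2 m3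
  have d12 : ({o, twin x} : Finset ι) ≠ {o, twin y} := fun hh => by
    have : twin x ∈ ({o, twin y} : Finset ι) := by rw [← hh]; simp
    simp only [Finset.mem_insert, Finset.mem_singleton] at this
    grind
  have d13 : ({o, twin x} : Finset ι) ≠ {twin x, twin y} := fun hh => by
    have : o ∈ ({twin x, twin y} : Finset ι) := by rw [← hh]; simp
    simp only [Finset.mem_insert, Finset.mem_singleton] at this
    grind
  have d23 : ({o, twin y} : Finset ι) ≠ {twin x, twin y} := fun hh => by
    have : o ∈ ({twin x, twin y} : Finset ι) := by rw [← hh]; simp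
    simp only [Finset.mem_insert, Finset.mem_singleton] at this
    grind
  have ex := h.edge_mul_pos x o (twin y) hxo hxo.symm hotx hxty.symm htxy.symm
  have ey := h.edge_mul_pos y o (twin x) hyo hyo.symm hoty hytx.symm htxy
  have tx := h.twin_mul_pos x o y hxo hxo.symm hotx hxy.symm hytx hyo.symm
  have ty := h.twin_mul_pos y o x hyo hyo.symm hoty hxy hxty hxo.symm
  have orient_rev : ∀ a b c : ℝ × ℝ, orient a b c = -orient c b a := fun a b c => by
    rw [← orient_cycle c b a, orient_swap]
  rw [orient_rev (F o), orient_swap (F (twin x)) (F o) (F y), neg_mul_neg] at m1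
  rw [orient_rev (F o) (F (twin y)) (F y), orient_swap (F (twin y)) (F o) (F x),
    neg_mul_neg] at m2
  rw [orient_cycle (F x), orient_cycle (F y), orient_swap_right (F y)] at m3
  rw [orient_rev (F y) (F o)] at ty
  generalize orient (F x) (F (twin x)) (F o) = p at *
  generalize orient (F x) (F (twin x)) (F (twin y)) = q at *
  generalize orient (F y) (F (twin y)) (F o) = r at *
  generalize orient (F y) (F (twin y)) (F (twin x)) = t at *
  generalize orient (F x) (F o) (F y) = d at *
  generalize orient (F (twin x)) (F o) (F y) = d₁ at *
  generalize orient (F (twin y)) (F o) (F x) = d₂ at *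
  have even_filter : ∀ {a b c : Finset ι}, a ≠ b → a ≠ c → b ≠ c → ∀ S : Finset (Finset ι),
      ((a ∈ S ∧ b ∉ S ∧ c ∈ S) ∨ (a ∉ S ∧ b ∈ S ∧ c ∈ S) ∨ (a ∈ S ∧ b ∈ S ∧ c ∉ S) ∨
        (a ∉ S ∧ b ∉ S ∧ c ∉ S)) → Even ((({a, b, c} : Finset (Finset ι)).filter (· ∈ S)).card) := by
    rintro a b c hab hac hbc S (⟨h1, h2, h3⟩ | ⟨h1, h2, h3⟩ | ⟨h1, h2, h3⟩ | ⟨h1, h2, h3⟩) <;>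
      simp [Finset.filter_insert, Finset.filter_singleton, h1, h2, h3, hab, hac, hbc]
  apply even_filter d12 d13 d23
  rw [m1, m2, m3]
  rcases pos_and_pos_or_neg_and_neg_of_mul_pos ex with ⟨hp, hq⟩ | ⟨hp, hq⟩ <;>
  rcases pos_and_pos_or_neg_and_neg_of_mul_pos ey with ⟨hr, ht⟩ | ⟨hr, ht⟩ <;>
  rcases pos_and_pos_or_neg_and_neg_of_mul_pos tx with ⟨hd, hd₁⟩ | ⟨hd, hd₁⟩ <;>
  rcases pos_and_pos_or_neg_and_neg_of_mul_pos ty with ⟨hd', hd₂⟩ | ⟨hd', hd₂⟩ <;>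
  first
  | linarith
  | simp [mul_neg_iff, mul_pos_iff, *, hp.le, hq.le, hr.le, ht.le, hd₁.le, hd₂.le]

end IsDoubled

section RegularPolygon

lemma orient_eq_det2 (a b c : ℝ × ℝ) : orient a b c = det2 a b + det2 b c - det2 a c := by
  simp only [orient, det2, Prod.fst_sub, Prod.snd_sub]; ring

variable {n : ℕ}

lemma sin_two_pi_mul_div_pos {t : ℝ} (h₀ : 0 < t) (h : 2 * t < n) :
    0 < Real.sin (2 * Real.pi * t / n) := by
  have hn : (0 : ℝ) < n := by linarith
  have := Real.pi_pos
  apply Real.sin_pos_of_pos_of_lt_pi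
  · positivity
  · rw [div_lt_iff₀ hn]; nlinarith

variable [NeZero n]

lemma vtx_add (i k : Fin n) : vtx n (i + k) =
    (Real.cos (2 * Real.pi * ((i : ℝ) + k) / n), Real.sin (2 * Real.pi * ((i : ℝ) + k) / n)) := by
  have hn : (n : ℝ) ≠ 0 := NeZero.ne _
  rcases lt_or_ge (i.val + k.val) n with h | h
  · have hv : (((i + k : Fin n) : ℕ) : ℝ) = (i : ℝ) + k := by
      rw [Fin.val_add, Nat.mod_eq_of_lt h]; push_cast; rfl
    rw [vtx, hv]
  · have hv : (((i + k : Fin n) : ℕ) : ℝ) = (i : ℝ) + k - n := by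
      rw [Fin.val_add, Nat.mod_eq_sub_mod h, Nat.mod_eq_of_lt (by omega), Nat.cast_sub h]
      push_cast; rfl
    rw [vtx, hv, show 2 * Real.pi * ((i : ℝ) + k - n) / n
      = 2 * Real.pi * ((i : ℝ) + k) / n - 2 * Real.pi by field_simp, Real.cos_sub_two_pi,
      Real.sin_sub_two_pi]

lemma det2_vtx_add (i k l : Fin n) : det2 (vtx n (i + k)) (vtx n (i + l)) =
    Real.sin (2 * Real.pi * ((l : ℝ) - k) / n) := by
  rw [vtx_add, vtx_add, det2, show 2 * Real.pi * ((l : ℝ) - k) / n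
    = 2 * Real.pi * ((i : ℝ) + l) / n - 2 * Real.pi * ((i : ℝ) + k) / n by ring, Real.sin_sub]
  ring

lemma det2_vtx_add_pos {i k l : Fin n} (hkl : k < l) (h : 2 * (l.val - k.val) < n) :
    0 < det2 (vtx n (i + k)) (vtx n (i + l)) := by
  rw [det2_vtx_add]
  have h1 : k.val < l.val := hkl
  have h2 : (k.val : ℝ) < l.val := by exact_mod_cast h1
  have h3 : 2 * (l.val : ℝ) < n + 2 * k.val := by
    have : 2 * l.val < n + 2 * k.val := by omega
    exact_mod_cast this
  exact sin_two_pi_mul_div_pos (by linarith) (by linarith)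

lemma det2_vtx_add_pos' {i k l : Fin n} (hkl : k < l) (h : n < 2 * (l.val - k.val)) :
    0 < det2 (vtx n (i + l)) (vtx n (i + k)) := by
  have h0 : (n : ℝ) ≠ 0 := NeZero.ne _
  rw [det2_vtx_add, ← Real.sin_add_two_pi, show 2 * Real.pi * ((k : ℝ) - l) / n + 2 * Real.pi
    = 2 * Real.pi * (n + k - l) / n by field_simp; ring]
  have h1 : l.val < n + k.val := by omega
  have h2 : (l.val : ℝ) < n + k.val := by exact_mod_cast h1
  have h3 : (n : ℝ) + 2 * k.val < 2 * l.val := by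
    have : n + 2 * k.val < 2 * l.val := by omega
    exact_mod_cast this
  exact sin_two_pi_mul_div_pos (by linarith) (by linarith)

lemma orient_vtx_pos {i k l : Fin n} (hk : 0 < k) (hkl : k < l) :
    0 < orient (vtx n i) (vtx n (i + k)) (vtx n (i + l)) := by
  have hn : (0 : ℝ) < n := by exact_mod_cast Nat.pos_of_ne_zero (NeZero.ne n)
  have h1 : 0 < k.val := hk
  have h2 : k.val < l.val := hkl
  have h1' : (0 : ℝ) < k.val := by exact_mod_cast h1
  have h2' : (k.val : ℝ) < l.val := by exact_mod_cast h2
  have h3' : (l.val : ℝ) < n := by exact_mod_cast l.isLt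
  have hsin : ∀ t : ℝ, 0 < t → t < n → 0 < Real.sin (Real.pi * t / n) := fun t ht htn => by
    have := Real.pi_pos
    apply Real.sin_pos_of_pos_of_lt_pi
    · positivity
    · rw [div_lt_iff₀ hn]; nlinarith
  have trig : ∀ x y : ℝ, Real.sin (2 * x) + Real.sin (2 * y) - Real.sin (2 * (x + y))
      = 4 * Real.sin x * Real.sin y * Real.sin (x + y) := fun x y => by
    rw [Real.sin_two_mul, Real.sin_two_mul, Real.sin_two_mul, Real.sin_add, Real.cos_add]
    linear_combination (-2 * Real.sin x * Real.cos x) * (Real.sin_sq_add_cos_sq y)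
      - (2 * Real.sin y * Real.cos y) * (Real.sin_sq_add_cos_sq x)
  have key : orient (vtx n i) (vtx n (i + k)) (vtx n (i + l)) =
      4 * Real.sin (Real.pi * k / n) * Real.sin (Real.pi * (l - k) / n)
        * Real.sin (Real.pi * l / n) := by
    have e := trig (Real.pi * k / n) (Real.pi * (l - k) / n)
    rw [show Real.pi * (k : ℝ) / n + Real.pi * (l - k) / n = Real.pi * l / n by ring] at e
    have e₁ := det2_vtx_add i 0 k
    have e₂ := det2_vtx_add i 0 l
    simp only [add_zero, Fin.val_zero, Nat.cast_zero, sub_zero] at e₁ e₂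
    rw [← e, orient_eq_det2, e₁, e₂, det2_vtx_add]
    ring_nf
  rw [key]
  have a1 := hsin k h1' (by linarith)
  have a2 := hsin (l - k) (by linarith) (by linarith)
  have a3 := hsin l (by linarith) h3'
  positivity

end RegularPolygon

open Filter Topology in
lemma eventually_forall_dist_lt {X : Type*} [PseudoMetricSpace X] {f : X → ℝ}
    (hf : Continuous f) {p : X} (hp : 0 < f p) :
    ∀ᶠ ε in 𝓝[>] (0 : ℝ), ∀ x, dist x p < ε → 0 < f x := by
  obtain ⟨δ, hδ, h⟩ := Metric.eventually_nhds_iff.mp (hf.continuousAt.eventually_const_lt hp)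
  filter_upwards [Ioo_mem_nhdsGT hδ] with ε hε x hx
  exact h (hx.trans hε.2)

open Filter Topology in
lemma exists_perturbation_radius (n : ℕ) : ∃ ε > (0 : ℝ),
    (∀ a b : Fin n, 0 < det2 (vtx n a) (vtx n b) →
      ∀ x y, dist x (vtx n a) < ε → dist y (vtx n b) < ε → 0 < det2 x y) ∧
    (∀ a b c : Fin n, 0 < orient (vtx n a) (vtx n b) (vtx n c) →
      ∀ x y z, dist x (vtx n a) < ε → dist y (vtx n b) < ε → dist z (vtx n c) < ε →
        0 < orient x y z) := by
  have hdet : Continuous (fun p : (ℝ × ℝ) × (ℝ × ℝ) => det2 p.1 p.2) := by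
    unfold det2; fun_prop
  have horient : Continuous
      (fun p : (ℝ × ℝ) × (ℝ × ℝ) × (ℝ × ℝ) => orient p.1 p.2.1 p.2.2) := by
    simp only [orient, det2]; fun_prop
  have h₁ : ∀ᶠ ε in 𝓝[>] (0 : ℝ), ∀ a b : Fin n, 0 < det2 (vtx n a) (vtx n b) →
      ∀ x y, dist x (vtx n a) < ε → dist y (vtx n b) < ε → 0 < det2 x y := by
    simp only [eventually_all]
    intro a b hab
    filter_upwards [eventually_forall_dist_lt hdet (p := (vtx n a, vtx n b)) hab]
      with ε hε x y hx hy
    exact hε (x, y) (max_lt hx hy)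
  have h₂ : ∀ᶠ ε in 𝓝[>] (0 : ℝ), ∀ a b c : Fin n,
      0 < orient (vtx n a) (vtx n b) (vtx n c) → ∀ x y z, dist x (vtx n a) < ε →
        dist y (vtx n b) < ε → dist z (vtx n c) < ε → 0 < orient x y z := by
    simp only [eventually_all]
    intro a b c habc
    filter_upwards [eventually_forall_dist_lt horient (p := (vtx n a, vtx n b, vtx n c)) habc]
      with ε hε x y z hx hy hz
    exact hε (x, y, z) (max_lt hx (max_lt hy hz))
  obtain ⟨ε, ⟨hε₁, hε₂⟩, hε⟩ := ((h₁.and h₂).and self_mem_nhdsWithin).exists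
  exact ⟨ε, hε, hε₁, hε₂⟩


section DoubledPolygon

variable {n : ℕ}

/-- The configuration of the points `P i` (labelled `some (i, false)`) and `P' i` (labelled
`some (i, true)`), together with the origin (labelled `none`). -/
def doubled (P P' : Fin n → ℝ × ℝ) : Option (Fin n × Bool) → ℝ × ℝ
  | none => (0, 0)
  | some (i, false) => P i
  | some (i, true) => P' i

/-- The twin of a label: `P i` and `P' i` are twins, and the origin is its own twin. -/
def twinLabel : Option (Fin n × Bool) → Option (Fin n × Bool) :=
  Option.map (fun p => (p.1, !p.2))

lemma image_doubled (P P' : Fin n → ℝ × ℝ) : Finset.univ.image (doubled P P') =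
    insert ((0, 0) : ℝ × ℝ) (Finset.image P Finset.univ ∪ Finset.image P' Finset.univ) := by
  ext x
  simp only [Finset.mem_image, Finset.mem_univ, true_and, Finset.mem_insert, Finset.mem_union,
    Option.exists, Prod.exists, Bool.exists_bool, doubled, exists_or, eq_comm (a := x)]

lemma doubled_mem_outer (P P' : Fin n → ℝ × ℝ) (i : Fin n) (s : Bool) :
    doubled P P' (some (i, s)) ∈ Finset.image P Finset.univ ∪ Finset.image P' Finset.univ := by
  cases s <;> simp [doubled]

variable [NeZero n] {P P' : Fin n → ℝ × ℝ}

lemma det2_vtx_pos_or {i j : Fin n} (hodd : Odd n) (hij : i ≠ j) :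
    0 < det2 (vtx n i) (vtx n j) ∨ 0 < det2 (vtx n j) (vtx n i) := by
  have hk : 0 < j - i := Fin.pos_iff_ne_zero.mpr (sub_ne_zero.mpr hij.symm)
  have hj : i + (j - i) = j := add_sub_cancel i j
  have h0 : ((0 : Fin n) : ℕ) = 0 := rfl
  obtain ⟨m, rfl⟩ := hodd
  rcases lt_or_gt_of_ne (show 2 * (j - i).val ≠ 2 * m + 1 by omega) with h | h
  · left
    have := det2_vtx_add_pos (i := i) hk (by rwa [h0, Nat.sub_zero])
    rwa [hj, add_zero] at this
  · right
    have := det2_vtx_add_pos' (i := i) hk (by rwa [h0, Nat.sub_zero])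
    rwa [hj, add_zero] at this

lemma doubled_injective (hodd : Odd n)
    (hdet : ∀ a b : Fin n, 0 < det2 (vtx n a) (vtx n b) → ∀ s t : Bool,
      0 < det2 (doubled P P' (some (a, s))) (doubled P P' (some (b, t))))
    (hside : ∀ i : Fin n, 0 < det2 (P' i - P i) ((0, 0) - P i)) :
    Function.Injective (doubled P P') := by
  have hside' : ∀ i, 0 < det2 (P i) (P' i) := fun i => by
    rw [← orient_zero_right]; exact hside i
  have hzero : ∀ p, doubled P P' (some p) ≠ (0, 0) := by
    rintro ⟨i, _ | _⟩ h <;> have h' := hside' i <;>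
      simp only [doubled] at h <;> simp [h, det2] at h'
  have hne : ∀ i s j t, i ≠ j → doubled P P' (some (i, s)) ≠ doubled P P' (some (j, t)) := by
    intro i s j t hij h
    rcases det2_vtx_pos_or hodd hij with h' | h'
    · have := hdet _ _ h' s t
      rw [h, det2_self] at this
      exact this.false
    · have := hdet _ _ h' t s
      rw [h, det2_self] at this
      exact this.false
  have hPP : ∀ i, P i ≠ P' i := fun i h => by
    have := hside' i
    rw [h, det2_self] at this
    exact this.false
  rintro (_ | ⟨i, s⟩) (_ | ⟨j, t⟩) h
  · rfl
  · exact absurd h.symm (hzero _)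
  · exact absurd h (hzero _)
  · have hij : i = j := by
      by_contra hij
      exact hne i s j t hij h
    subst hij
    have := hPP i
    cases s <;> cases t <;> first | rfl | exact absurd h this | exact absurd h.symm this

/-- The points `P j` and `P' j` span a supporting line of the configuration. -/
lemma orient_doubled_pos {m : ℕ} (hn : n = 2 * m + 1) (hm : 1 ≤ m)
    (hdet : ∀ a b : Fin n, 0 < det2 (vtx n a) (vtx n b) → ∀ s t : Bool,
      0 < det2 (doubled P P' (some (a, s))) (doubled P P' (some (b, t))))
    (hconv : ConvexPos (Finset.image P Finset.univ ∪ Finset.image P' Finset.univ))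
    (hside : ∀ i : Fin n, 0 < det2 (P' i - P i) ((0, 0) - P i))
    (hgen : Generic (Finset.univ.image (doubled P P')))
    (hzero : ∀ i : Fin n, nsep (Finset.univ.image (doubled P P')) (P i) (P' i) = 0)
    (j : Fin n) {c : Option (Fin n × Bool)} (hc : c ≠ some (j, false)) (hc' : c ≠ some (j, true)) :
    0 < orient (P j) (P' j) (doubled P P' c) := by
  have hinj := doubled_injective ⟨m, hn⟩ hdet hside
  have hmem : ∀ a, doubled P P' a ∈ Finset.univ.image (doubled P P') := fun a => by simp
  have hne0 : ∀ a b c, a ≠ b → a ≠ c → b ≠ c →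
      orient (doubled P P' a) (doubled P P' b) (doubled P P' c) ≠ 0 := fun a b c hab hac hbc =>
    hgen.orient_ne_zero (hmem a) (hmem b) (hmem c) (hinj.ne hab) (hinj.ne hac) (hinj.ne hbc)
  have hX : doubled P P' (some (j, false)) = P j := rfl
  have hY : doubled P P' (some (j, true)) = P' j := rfl
  have hXY : (some (j, false) : Option (Fin n × Bool)) ≠ some (j, true) := by simp
  have hsame : ∀ a b : Fin n × Bool, a.1 ≠ j → b ≠ (j, false) → b ≠ (j, true) →
      orient (P j) (P' j) (doubled P P' (some b)) < 0 →
      orient (P j) (P' j) (doubled P P' (some a)) < 0 := by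
    rintro ⟨a, s⟩ ⟨b, t⟩ haj hb hb' hneg
    have ha1 : (some (a, s) : Option (Fin n × Bool)) ≠ some (j, false) := by
      simp only [ne_eq, Option.some.injEq, Prod.mk.injEq]; exact fun h => haj h.1
    have ha2 : (some (a, s) : Option (Fin n × Bool)) ≠ some (j, true) := by
      simp only [ne_eq, Option.some.injEq, Prod.mk.injEq]; exact fun h => haj h.1
    have hb1 : (some (b, t) : Option (Fin n × Bool)) ≠ some (j, false) := by simpa using hb
    have hb2 : (some (b, t) : Option (Fin n × Bool)) ≠ some (j, true) := by simpa using hb'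
    by_contra hcon
    have hapos : 0 < orient (P j) (P' j) (doubled P P' (some (a, s))) :=
      lt_of_le_of_ne (not_lt.mp hcon) (hne0 _ _ _ hXY ha1.symm ha2.symm).symm
    have hab : (some (a, s) : Option (Fin n × Bool)) ≠ some (b, t) := fun h => by
      rw [h] at hapos; linarith
    have hsep : SepLine (P j) (P' j) (doubled P P' (some (a, s))) (doubled P P' (some (b, t))) :=
      mul_neg_of_pos_of_neg hapos hneg
    refine hconv.sepLine_of_sepLine (doubled_mem_outer P P' a s) (doubled_mem_outer P P' b t)
      (doubled_mem_outer P P' j false) (doubled_mem_outer P P' j true) (hinj.ne ha1)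
      (hinj.ne ha2) (hinj.ne hb1) (hinj.ne hb2) (hinj.ne hXY) hsep ?_
    have hns := not_sepLine_of_nsep_eq_zero (hzero j) (hmem (some (a, s))) (hmem (some (b, t)))
      (hinj.ne hab) (hinj.ne ha1) (hinj.ne ha2) (hinj.ne hb1) (hinj.ne hb2)
    rw [sepLine_iff, not_lt] at hns
    exact lt_of_le_of_ne hns
      (mul_ne_zero (hne0 _ _ _ hab ha1 hb1) (hne0 _ _ _ hab ha2 hb2)).symm
  rcases c with _ | c
  · exact hside j
  by_contra hcon
  have hneg : orient (P j) (P' j) (doubled P P' (some c)) < 0 :=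
    lt_of_le_of_ne (not_lt.mp hcon) (hne0 _ _ _ hXY hc.symm hc'.symm)
  let k : Fin n := ⟨m, by omega⟩
  let l : Fin n := ⟨m + 1, by omega⟩
  have h0 : ((0 : Fin n) : ℕ) = 0 := rfl
  have hk0 : (0 : Fin n) < k := by rw [Fin.lt_def, h0]; exact hm
  have hl0 : (0 : Fin n) < l := by rw [Fin.lt_def, h0]; exact Nat.succ_pos m
  have hkl : k < l := by rw [Fin.lt_def]; exact Nat.lt_succ_self m
  have d₁ : 0 < det2 (P j) (P (j + k)) := by
    have := det2_vtx_add_pos (i := j) hk0 (by simp only [h0, k]; omega)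
    rw [add_zero] at this
    exact hdet _ _ this false false
  have d₂ : 0 < det2 (P (j + k)) (P (j + l)) :=
    hdet _ _ (det2_vtx_add_pos (i := j) hkl (by simp only [k, l]; omega)) false false
  have d₃ : 0 < det2 (P (j + l)) (P j) := by
    have := det2_vtx_add_pos' (i := j) hl0 (by simp only [h0, l]; omega)
    rw [add_zero] at this
    exact hdet _ _ this false false
  have n₁ := hsame (j + k, false) c (by simpa using hk0.ne') (by simpa using hc)
    (by simpa using hc') hneg
  have n₂ := hsame (j + l, false) c (by simpa using hl0.ne') (by simpa using hc)
    (by simpa using hc') hneg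
  simp only [doubled] at n₁ n₂
  have hpos : 0 < orient (P j) (P' j) (0, 0) := hside j
  have key : (det2 (P j) (P (j + k)) + det2 (P (j + k)) (P (j + l)) + det2 (P (j + l)) (P j))
        * orient (P j) (P' j) (0, 0)
      = det2 (P (j + l)) (P j) * orient (P j) (P' j) (P (j + k))
        + det2 (P j) (P (j + k)) * orient (P j) (P' j) (P (j + l)) := by
    simp only [orient, det2, Prod.fst_sub, Prod.snd_sub]; ring
  nlinarith [mul_pos (add_pos (add_pos d₁ d₂) d₃) hpos, mul_neg_of_pos_of_neg d₃ n₁,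
    mul_neg_of_pos_of_neg d₁ n₂]

lemma isDoubled_doubled {m : ℕ} (hn : n = 2 * m + 1) (hm : 1 ≤ m)
    (hdet : ∀ a b : Fin n, 0 < det2 (vtx n a) (vtx n b) → ∀ s t : Bool,
      0 < det2 (doubled P P' (some (a, s))) (doubled P P' (some (b, t))))
    (hconv : ConvexPos (Finset.image P Finset.univ ∪ Finset.image P' Finset.univ))
    (hside : ∀ i : Fin n, 0 < det2 (P' i - P i) ((0, 0) - P i))
    (hgen : Generic (Finset.univ.image (doubled P P')))
    (hzero : ∀ i : Fin n, nsep (Finset.univ.image (doubled P P')) (P i) (P' i) = 0) :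
    IsDoubled (doubled P P') none twinLabel := by
  have hinj := doubled_injective ⟨m, hn⟩ hdet hside
  have hmem : ∀ a, doubled P P' a ∈ Finset.univ.image (doubled P P') := fun a => by simp
  have hne0 : ∀ a b c, a ≠ b → a ≠ c → b ≠ c →
      orient (doubled P P' a) (doubled P P' b) (doubled P P' c) ≠ 0 := fun a b c hab hac hbc =>
    hgen.orient_ne_zero (hmem a) (hmem b) (hmem c) (hinj.ne hab) (hinj.ne hac) (hinj.ne hbc)
  refine ⟨hinj, hne0, ?_, ?_, ?_, ?_⟩
  · rintro (_ | ⟨i, s⟩) <;> simp [twinLabel]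
  · rintro (_ | ⟨i, s⟩) <;> simp [twinLabel]
  · rintro (_ | ⟨i, s⟩) b c ha hba hbta hca hcta hbc
    · exact absurd rfl ha
    have hz : nsep (Finset.univ.image (doubled P P')) (doubled P P' (some (i, s)))
        (doubled P P' (twinLabel (some (i, s)))) = 0 := by
      cases s
      · exact hzero i
      · rw [nsep_comm]; exact hzero i
    have hns := not_sepLine_of_nsep_eq_zero hz (hmem b) (hmem c)
      (hinj.ne hbc) (hinj.ne hba) (hinj.ne hbta) (hinj.ne hca) (hinj.ne hcta)
    rw [sepLine_iff, not_lt, orient_cycle (doubled P P' (some (i, s))),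
      orient_cycle (doubled P P' (twinLabel _))] at hns
    exact lt_of_le_of_ne hns
      (mul_ne_zero (hne0 _ _ _ hba.symm hca.symm hbc) (hne0 _ _ _ hbta.symm hcta.symm hbc)).symm
  · rintro (_ | ⟨i, s⟩) b c ha hba hbta hca hcta
    · exact absurd rfl ha
    have hpos := fun c => orient_doubled_pos hn hm hdet hconv hside hgen hzero i (c := c)
    cases s
    · exact mul_pos (hpos b hba hbta) (hpos c hca hcta)
    · have := mul_pos (hpos b hbta hba) (hpos c hcta hca)
      rwa [← neg_mul_neg, ← orient_swap, ← orient_swap] at this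

lemma nsep_consecutive {m : ℕ} (hn : n = 2 * m + 1) (hm : 1 ≤ m)
    (hdet : ∀ a b : Fin n, 0 < det2 (vtx n a) (vtx n b) → ∀ s t : Bool,
      0 < det2 (doubled P P' (some (a, s))) (doubled P P' (some (b, t))))
    (horient : ∀ a b c : Fin n, 0 < orient (vtx n a) (vtx n b) (vtx n c) → ∀ s t u : Bool,
      0 < orient (doubled P P' (some (a, s))) (doubled P P' (some (b, t)))
        (doubled P P' (some (c, u))))
    (hconv : ConvexPos (Finset.image P Finset.univ ∪ Finset.image P' Finset.univ))
    (hside : ∀ i : Fin n, 0 < det2 (P' i - P i) ((0, 0) - P i))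
    (hgen : Generic (Finset.univ.image (doubled P P')))
    (hzero : ∀ i : Fin n, nsep (Finset.univ.image (doubled P P')) (P i) (P' i) = 0)
    (i : Fin n) :
    nsep (Finset.univ.image (doubled P P')) (P' i) (P (i + 1)) = 2 := by
  have hinj := doubled_injective ⟨m, hn⟩ hdet hside
  have hpos := fun j c => orient_doubled_pos hn hm hdet hconv hside hgen hzero j (c := c)
  have h0 : ((0 : Fin n) : ℕ) = 0 := rfl
  have h1 : ((1 : Fin n) : ℕ) = 1 := by
    rw [Fin.val_one', Nat.mod_eq_of_lt (by omega)]
  have h01 : (0 : Fin n) < 1 := by rw [Fin.lt_def, h0, h1]; exact Nat.one_pos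
  set x : Option (Fin n × Bool) := some (i, true) with hx
  set y : Option (Fin n × Bool) := some (i + 1, false) with hy
  have hxy : x ≠ y := by simp [hx, hy]
  have hfx : doubled P P' x = P' i := rfl
  have hfy : doubled P P' y = P (i + 1) := rfl
  let l : Fin n := ⟨m + 1, by omega⟩
  have shift : ∀ a : Fin n, i + (a - i) = a := fun a => add_sub_cancel i a
  have outer : ∀ a : Fin n × Bool, some a ≠ x → some a ≠ y →
      0 < orient (doubled P P' x) (doubled P P' y) (doubled P P' (some a)) := by
    rintro ⟨a, s⟩ hax hay
    by_cases ha : a = i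
    · subst ha
      have hs : s = false := by cases s; rfl; exact absurd rfl hax
      subst hs
      have := hpos a y (by simp [hy, h01.ne']) (by simp [hy])
      rwa [← orient_cycle] at this
    by_cases ha' : a = i + 1
    · subst ha'
      have hs : s = true := by cases s; exact absurd rfl hay; rfl
      subst hs
      have := hpos (i + 1) x (by simp [hx])
        (by rw [hx]; simpa [eq_comm] using h01.ne')
      rwa [← orient_cycle, ← orient_cycle] at this
    · have hk : (1 : Fin n) < a - i := by
        have n0 : a - i ≠ 0 := sub_ne_zero.mpr ha
        have n1 : a - i ≠ 1 := fun h => ha' (by rw [← h, shift])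
        rw [Ne, Fin.ext_iff] at n0 n1
        rw [Fin.lt_def]; omega
      have := orient_vtx_pos (i := i) h01 hk
      rw [shift] at this
      exact horient _ _ _ this _ _ _
  have central : ∀ a : Fin n × Bool, some a ≠ x → some a ≠ y →
      (SepLine (doubled P P' none) (doubled P P' (some a)) (doubled P P' x) (doubled P P' y) ↔
        a.1 = i + l) := by
    rintro ⟨a, s⟩ hax hay
    have hl : a = i + l ↔ (a - i).val = m + 1 := by
      rw [← sub_eq_iff_eq_add', Fin.ext_iff]
    rw [hl, sepLine_iff]
    change orient (0, 0) _ _ * orient (0, 0) _ _ < 0 ↔ _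
    rw [orient_zero_left, orient_zero_left]
    have hside' : ∀ j, 0 < det2 (P j) (P' j) := fun j => by
      rw [← orient_zero_right]; exact hside j
    have hadj : ∀ s t, 0 < det2 (doubled P P' (some (i, s))) (doubled P P' (some (i + 1, t))) := by
      have := det2_vtx_add_pos (i := i) h01 (by rw [h0, h1]; omega)
      rw [add_zero] at this
      exact hdet _ _ this
    have same : ∀ {p q : ℝ}, 0 < p → 0 < q → (a - i).val ≠ m + 1 →
        (p * q < 0 ↔ (a - i).val = m + 1) := fun hp hq hne =>
      iff_of_false (mul_pos hp hq).not_gt hne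
    by_cases ha : a = i
    · subst ha
      have hs : s = false := by cases s; rfl; exact absurd rfl hax
      subst hs
      exact same (hside' a) (hadj _ _) (by rw [sub_self, h0]; omega)
    by_cases ha' : a = i + 1
    · subst ha'
      have hs : s = true := by cases s; exact absurd rfl hay; rfl
      subst hs
      rw [det2_swap (doubled P P' x), det2_swap (doubled P P' y), neg_mul_neg]
      exact same (hadj _ _) (hside' _) (by rw [add_sub_cancel_left, h1]; omega)
    have hk : 1 < (a - i).val := by
      have n0 : a - i ≠ 0 := sub_ne_zero.mpr ha
      have n1 : a - i ≠ 1 := fun h => ha' (by rw [← h, shift])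
      rw [Ne, Fin.ext_iff] at n0 n1
      omega
    have hk0 : (0 : Fin n) < a - i := by rw [Fin.lt_def, h0]; omega
    have hk1 : (1 : Fin n) < a - i := by rw [Fin.lt_def, h1]; omega
    have hxa : 2 * (a - i).val < n → 0 < det2 (doubled P P' x) (doubled P P' (some (a, s))) := by
      intro h
      have := det2_vtx_add_pos (i := i) hk0 (by rw [h0]; omega)
      rw [add_zero, shift] at this
      exact hdet _ _ this _ _
    have hax' : n < 2 * (a - i).val → 0 < det2 (doubled P P' (some (a, s))) (doubled P P' x) := by
      intro h
      have := det2_vtx_add_pos' (i := i) hk0 (by rw [h0]; omega)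
      rw [add_zero, shift] at this
      exact hdet _ _ this _ _
    have hya : 2 * ((a - i).val - 1) < n →
        0 < det2 (doubled P P' y) (doubled P P' (some (a, s))) := by
      intro h
      have := det2_vtx_add_pos (i := i) hk1 (by rw [h1]; omega)
      rw [shift] at this
      exact hdet _ _ this _ _
    have hay' : n < 2 * ((a - i).val - 1) →
        0 < det2 (doubled P P' (some (a, s))) (doubled P P' y) := by
      intro h
      have := det2_vtx_add_pos' (i := i) hk1 (by rw [h1]; omega)
      rw [shift] at this
      exact hdet _ _ this _ _
    rcases lt_trichotomy (a - i).val (m + 1) with h | h | h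
    · rw [det2_swap (doubled P P' x), det2_swap (doubled P P' y), neg_mul_neg]
      exact same (hxa (by omega)) (hya (by omega)) h.ne
    · rw [det2_swap (doubled P P' y)]
      exact iff_of_true (mul_neg_of_pos_of_neg (hax' (by omega))
        (neg_neg_of_pos (hya (by omega)))) h
    · exact same (hax' (by omega)) (hay' (by omega)) h.ne'
  have hl0 : i + l ≠ i := by
    simpa using (Fin.ne_of_val_ne (by rw [h0]; exact Nat.succ_ne_zero m) : l ≠ 0)
  have hl1 : i + l ≠ i + 1 := by
    simpa using (Fin.ne_of_val_ne (by rw [h1]; simp only [l]; omega) : l ≠ 1)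
  have hlx : ∀ s, (some (i + l, s) : Option (Fin n × Bool)) ≠ x := by simp [hx, hl0]
  have hly : ∀ s, (some (i + l, s) : Option (Fin n × Bool)) ≠ y := by
    intro s; rw [hy]; simp only [ne_eq, Option.some.injEq, Prod.mk.injEq, hl1, false_and,
      not_false_eq_true]
  rw [← hfx, ← hfy, nsep_image_univ hinj]
  refine card_sepPairs_eq_two (o := none) (p := some (i + l, false)) (q := some (i + l, true))
    (by simp) (by simp) (by simp) (by simp [hx]) (by simp [hy]) (hlx _) (hly _) (hlx _) (hly _)
    ?_ ?_
  · rintro (_ | a) (_ | b) hab hao hbo hax hay hbx hby hsep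
    · exact hao rfl
    · exact hao rfl
    · exact hbo rfl
    · refine hconv.sepLine_of_sepLine (doubled_mem_outer P P' i true)
        (doubled_mem_outer P P' (i + 1) false) (doubled_mem_outer P P' a.1 a.2)
        (doubled_mem_outer P P' b.1 b.2) (hinj.ne hax.symm) (hinj.ne hbx.symm)
        (hinj.ne hay.symm) (hinj.ne hby.symm) (hinj.ne hab) hsep
        (mul_pos (outer a hax hay) (outer b hbx hby))
  · rintro (_ | ⟨a, s⟩) hao hax hay
    · exact absurd rfl hao
    · rw [central (a, s) hax hay]
      cases s <;> simp

end DoubledPolygon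

/-- For odd `n ≥ 3`, the `2n+1`-point configuration obtained from a regular
`n`-gon by replacing each vertex by a pair of infinitesimally-close points
(with the `2n` outer points in convex position, labeled consistently with the
counterclockwise cyclic order) and adding the barycenter is monochromatic.
In particular `n(P_i,P'_i) = 0`, `n(P'_i,P_{i+1}) = 2` and `n(C,P_i)` is even. -/
theorem doubled_ngon_with_center_mono (n : ℕ) [NeZero n] (hn : 3 ≤ n) (hodd : Odd n) :
    ∃ ε > (0 : ℝ), ∀ P P' : Fin n → ℝ × ℝ,
      (∀ i : Fin n, dist (P i) (vtx n i) < ε ∧ dist (P' i) (vtx n i) < ε) →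
      ConvexPos (Finset.image P Finset.univ ∪ Finset.image P' Finset.univ) →
      (∀ i : Fin n, 0 < det2 (P' i - P i) ((0, 0) - P i)) →
      Generic (insert ((0, 0) : ℝ × ℝ)
        (Finset.image P Finset.univ ∪ Finset.image P' Finset.univ)) →
      (∀ i : Fin n,
        nsep (insert ((0, 0) : ℝ × ℝ)
          (Finset.image P Finset.univ ∪ Finset.image P' Finset.univ)) (P i) (P' i) = 0) →
      Mono (insert ((0, 0) : ℝ × ℝ)
          (Finset.image P Finset.univ ∪ Finset.image P' Finset.univ)) ∧
        ∀ i : Fin n,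
          nsep (insert ((0, 0) : ℝ × ℝ)
            (Finset.image P Finset.univ ∪ Finset.image P' Finset.univ))
            (P i) (P' i) = 0 ∧
          nsep (insert ((0, 0) : ℝ × ℝ)
            (Finset.image P Finset.univ ∪ Finset.image P' Finset.univ))
            (P' i) (P (i + 1)) = 2 ∧
          Even (nsep (insert ((0, 0) : ℝ × ℝ)
            (Finset.image P Finset.univ ∪ Finset.image P' Finset.univ))
            ((0, 0)) (P i)) := by
  obtain ⟨m, hm⟩ := hodd
  have hm1 : 1 ≤ m := by omega
  obtain ⟨ε, hε, hdet, horient⟩ := exists_perturbation_radius n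
  refine ⟨ε, hε, fun P P' hnear hconv hside hgen hzero => ?_⟩
  have hnear' : ∀ i s, dist (doubled P P' (some (i, s))) (vtx n i) < ε := by
    rintro i (_ | _)
    exacts [(hnear i).1, (hnear i).2]
  rw [← image_doubled] at hgen hzero ⊢
  have hdet' := fun a b hab s t => hdet a b hab _ _ (hnear' a s) (hnear' b t)
  have horient' := fun a b c habc s t u =>
    horient a b c habc _ _ _ (hnear' a s) (hnear' b t) (hnear' c u)
  have hD := isDoubled_doubled hm hm1 hdet' hconv hside hgen hzero
  have hcenter : ∀ x, Even (nsep (Finset.univ.image (doubled P P')) (0, 0) (doubled P P' x)) :=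
    fun x => by
      rw [show ((0, 0) : ℝ × ℝ) = doubled P P' none from rfl, nsep_image_univ hD.injective]
      exact hD.even_card_sepPairs_center x
  have heven : ∀ x y, x ≠ y → Even (nsep (Finset.univ.image (doubled P P'))
      (doubled P P' x) (doubled P P' y)) := by
    intro x y hxy
    by_cases hx : x = none
    · subst hx; exact hcenter y
    by_cases hy : y = none
    · subst hy; rw [nsep_comm]; exact hcenter x
    by_cases hxty : x = twinLabel y
    · subst hxty
      obtain ⟨⟨i, s⟩, rfl⟩ := Option.ne_none_iff_exists'.mp hy
      have h0 : nsep (Finset.univ.image (doubled P P')) (doubled P P' (twinLabel (some (i, s))))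
          (doubled P P' (some (i, s))) = 0 := by
        cases s
        · rw [nsep_comm]; exact hzero i
        · exact hzero i
      rw [h0]
      exact Even.zero
    · rw [nsep_image_univ hD.injective]
      exact hD.even_card_sepPairs hx hy hxy hxty
  have hcard : (Finset.univ.image (doubled P P')).card = 2 * n + 1 := by
    rw [Finset.card_image_of_injective _ hD.injective, Finset.card_univ, Fintype.card_option,
      Fintype.card_prod, Fintype.card_fin, Fintype.card_bool, mul_comm]
  refine ⟨?_, fun i => ⟨hzero i,
    nsep_consecutive hm hm1 hdet' horient' hconv hside hgen hzero i, hcenter (some (i, false))⟩⟩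
  intro A hA B hB hAB
  obtain ⟨x, -, rfl⟩ := Finset.mem_image.mp hA
  obtain ⟨y, -, rfl⟩ := Finset.mem_image.mp hB
  obtain ⟨k, hk⟩ := heven x y (fun h => hAB (congrArg _ h))
  rw [Orchard, hcard, hk]
  exact Int.ModEq.symm ((Int.modEq_iff_dvd).mpr ⟨k - n + 1, by push_cast; ring⟩)
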